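/- Let n ≥ 2, let F := ℂ(r) be the field of rational functions in one variable r over ℂ, and set w := u₁⋯u_n + r·(u₁^n + ⋯ + u_n^n) ∈ F[u₁,…,u_n], with Jacobian ideal J(w). Then the kernel of the F-algebra homomorphism F[x] → F[u₁,…,u_n]/J(w) sending x to the class of u₁⋯u_n is the principal ideal generated by x^{n−1}. In particular, (u₁⋯u_n)^{n−1} ∈ J(w) while (u₁⋯u_n)^{n−2} ∉ J(w). -/

import Mathlib

/-!
Write `α = u₁⋯u_n` and `d = -r n`, so that `∂_j w = α/u_j - d u_j^{n-1}`.

*Membership.* Multiplying the relations `α/u_j ≡ d u_j^{n-1}` over all `j` gives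
`α^{n-1} ≡ d^n α^{n-1}` modulo `J(w)`, and `d^n ≠ 1` in `ℂ(r)`; hence `α^{n-1} ∈ J(w)`.

*Non-membership.* The degree `n(n-2)` of `α^{n-2}` is the socle degree of the Jacobian ring, so
there should be a linear functional supported in that degree which kills `J(w)` but not
`α^{n-2}`. It is explicit (`socleWeight`): a monomial `u^a` of degree `n(n-2)` all of whose
exponents are congruent to the same `s` modulo `n` goes to `d^s`, every other monomial to `0`.
For a monomial `u^m` the two terms of `u^m ∂_j w` have exponents `a = m + 1 - e_j` and
`b = m + (n-1) e_j`, whose residues mod `n` differ by one in each coordinate, so the values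
cancel unless the residue wraps around. That would force the `n-1` positive exponents `a_i`,
`i ≠ j`, to be multiples of `n`, whence `deg u^a ≥ n(n-1) > n(n-2)`.

*Kernel.* The kernel is an ideal of the principal ideal domain `F[x]` containing `x^{n-1}` but
not `x^{n-2}`, so it is `(x^{n-1})`.
-/

open MvPolynomial in
/-- The Jacobian relations: `∂_j w = α/u_j + r n u_j^{n-1}`. -/
lemma pderiv_superpotential {F : Type*} [Field F] (n : ℕ) (r : F) (j : Fin n) :
    pderiv j (∏ i, X i + C r * ∑ i, X i ^ n : MvPolynomial (Fin n) F) =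
      ∏ i ∈ Finset.univ.erase j, X i + C (r * n) * X j ^ (n - 1) := by
  have h1 : pderiv j (∏ i ∈ Finset.univ.erase j, X i : MvPolynomial (Fin n) F) = 0 := by
    apply pderiv_eq_zero_of_notMem_vars
    intro h
    have := vars_prod _ h
    simp only [vars_X, Finset.mem_biUnion, Finset.mem_erase, Finset.mem_singleton] at this
    obtain ⟨i, hi, rfl⟩ := this
    exact hi.1 rfl
  rw [← Finset.mul_prod_erase Finset.univ _ (Finset.mem_univ j)]
  simp only [map_add, Derivation.leibniz, h1, map_sum, Derivation.leibniz_pow, pderiv_C]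
  rw [Finset.sum_eq_single j]
  · simp only [pderiv_X_self, smul_eq_mul, nsmul_eq_mul, map_mul, map_natCast]
    ring
  · intro i _ hij
    rw [pderiv_X_of_ne hij]
    simp
  · simp

/-- The exponent vector `(1,…,1) - e_j` of `α/u_j`. -/
noncomputable def omitExp {n : ℕ} (j : Fin n) : Fin n →₀ ℕ :=
  Finsupp.equivFunOnFinite.symm fun i => if i = j then 0 else 1

open MvPolynomial in
lemma prod_erase_eq_monomial {F : Type*} [Field F] {n : ℕ} (j : Fin n) :
    (∏ i ∈ Finset.univ.erase j, X i : MvPolynomial (Fin n) F) = monomial (omitExp j) 1 := by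
  rw [monomial_eq, Finsupp.prod_fintype _ _ (by simp),
    ← Finset.mul_prod_erase Finset.univ _ (Finset.mem_univ j)]
  simp only [omitExp, Finsupp.equivFunOnFinite_symm_apply_apply, C_1, one_mul, if_true, pow_zero]
  refine Finset.prod_congr rfl fun i hi => ?_
  simp [Finset.ne_of_mem_erase hi]

open Classical in
/-- The value on the monomial `u^a` of the functional on `F[u₁,…,u_n]` that annihilates `J(w)`:
it is `d^s` if `a` has total degree `n(n-2)` and all its entries are congruent to `s` modulo `n`
with `0 ≤ s < n`, and `0` otherwise. The residue `s` is read off at the index `i₀`. -/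
noncomputable def socleWeight {F : Type*} [Field F] {n : ℕ} (d : F) (i₀ : Fin n)
    (a : Fin n →₀ ℕ) : F :=
  if ∑ i, a i = n * (n - 2) ∧ ∀ i, a i % n = a i₀ % n then d ^ (a i₀ % n) else 0

/-- Subtracting `1` from every entry modulo `n` preserves the property that all entries are
congruent. -/
lemma mod_eq_iff_of_shift {n : ℕ} (x x' y y' : ℕ) (hx : x' + 1 ≡ x [MOD n])
    (hy : y' + 1 ≡ y [MOD n]) : x % n = y % n ↔ x' % n = y' % n := by
  constructor
  · intro h
    have h2 : x' + 1 ≡ y' + 1 [MOD n] := hx.trans (Nat.ModEq.trans h hy.symm)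
    exact Nat.ModEq.add_right_cancel' 1 h2
  · intro h
    exact hx.symm.trans ((Nat.ModEq.add_right 1 h).trans hy)

/-- Compatibility of `socleWeight` with the relation `u^m · (α/u_j - d u_j^{n-1})`. -/
lemma socleWeight_rel {F : Type*} [Field F] {n : ℕ} (hn : 2 ≤ n) (d : F) (i₀ j : Fin n)
    (m : Fin n →₀ ℕ) :
    socleWeight d i₀ (m + omitExp j) =
      d * socleWeight d i₀ (m + Finsupp.single j (n - 1)) := by
  set a := m + omitExp j with ha
  set b := m + Finsupp.single j (n - 1) with hb
  have haj : a j = m j := by simp [ha, omitExp]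
  have hbj : b j = m j + (n - 1) := by simp [hb]
  have hai : ∀ i, i ≠ j → a i = m i + 1 := fun i hi => by simp [ha, omitExp, hi]
  have hbi : ∀ i, i ≠ j → b i = m i := fun i hi => by simp [hb, hi.symm]
  have hsa : ∑ i, a i = ∑ i, m i + (n - 1) := by
    rw [← Finset.add_sum_erase Finset.univ _ (Finset.mem_univ j),
      ← Finset.add_sum_erase Finset.univ m (Finset.mem_univ j), haj,
      Finset.sum_congr rfl fun i hi => hai i (Finset.ne_of_mem_erase hi), Finset.sum_add_distrib]
    simp [Finset.card_erase_of_mem, add_assoc]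
  have hsb : ∑ i, b i = ∑ i, m i + (n - 1) := by
    rw [← Finset.add_sum_erase Finset.univ _ (Finset.mem_univ j),
      ← Finset.add_sum_erase Finset.univ m (Finset.mem_univ j), hbj,
      Finset.sum_congr rfl fun i hi => hbi i (Finset.ne_of_mem_erase hi)]
    ring
  have hshift : ∀ i, b i + 1 ≡ a i [MOD n] := by
    intro i
    by_cases hi : i = j
    · subst hi
      rw [haj, hbj, add_assoc, Nat.sub_add_cancel (by omega)]
      simp [Nat.ModEq]
    · rw [hai i hi, hbi i hi]
  have hcond : (∑ i, a i = n * (n - 2) ∧ ∀ i, a i % n = a i₀ % n) ↔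
      (∑ i, b i = n * (n - 2) ∧ ∀ i, b i % n = b i₀ % n) := by
    rw [hsa, hsb]
    exact and_congr_right fun _ => forall_congr' fun i =>
      mod_eq_iff_of_shift _ _ _ _ (hshift i) (hshift i₀)
  unfold socleWeight
  by_cases h : ∑ i, a i = n * (n - 2) ∧ ∀ i, a i % n = a i₀ % n
  · rw [if_pos h, if_pos (hcond.1 h), ← pow_succ']
    congr 1
    -- Residue `0` for `a` would make the exponents `a_i`, `i ≠ j`, positive multiples of `n`.
    have hne : a i₀ % n ≠ 0 := by
      intro h0
      have hge : ∀ i ∈ Finset.univ.erase j, n ≤ a i := by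
        intro i hi
        have h1 : n ∣ a i := Nat.dvd_of_mod_eq_zero ((h.2 i).trans h0)
        have h2 := hai i (Finset.ne_of_mem_erase hi)
        exact Nat.le_of_dvd (by omega) h1
      have h3 := Finset.card_nsmul_le_sum _ _ _ hge
      rw [Finset.card_erase_of_mem (Finset.mem_univ j), Finset.card_univ, Fintype.card_fin,
        smul_eq_mul] at h3
      have h4 := Finset.add_sum_erase Finset.univ a (Finset.mem_univ j)
      obtain ⟨k, rfl⟩ := Nat.exists_eq_add_of_le' hn
      have h5 := h.1
      simp only [Nat.add_sub_cancel, show k + 2 - 1 = k + 1 by omega] at h3 h5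
      nlinarith
    have h6 : (b i₀ + 1) % n = a i₀ % n := hshift i₀
    have h7 : b i₀ % n < n := Nat.mod_lt _ (by omega)
    rw [Nat.add_mod, Nat.mod_eq_of_lt (show 1 < n by omega)] at h6
    by_cases h8 : b i₀ % n + 1 < n
    · rw [Nat.mod_eq_of_lt h8] at h6
      exact h6.symm
    · rw [show b i₀ % n + 1 = n by omega, Nat.mod_self] at h6
      exact absurd h6.symm hne
  · rw [if_neg h, if_neg (fun h' => h (hcond.2 h')), mul_zero]

open MvPolynomial in
lemma prod_X_pow_notMem {F : Type*} [Field F] {n : ℕ} (hn : 2 ≤ n) (d : F) (hd : d ≠ 0) :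
    (∏ i, X i : MvPolynomial (Fin n) F) ^ (n - 2) ∉
      Ideal.span (Set.range fun j : Fin n =>
        (∏ i ∈ Finset.univ.erase j, X i + C (-d) * X j ^ (n - 1) : MvPolynomial (Fin n) F)) := by
  let i₀ : Fin n := ⟨0, by omega⟩
  let φ : MvPolynomial (Fin n) F →ₗ[F] F :=
    (basisMonomials (Fin n) F).constr F (socleWeight d i₀)
  have hφ : ∀ a (c : F), φ (monomial a c) = c * socleWeight d i₀ a := by
    intro a c
    have h1 : φ (monomial a 1) = socleWeight d i₀ a := by
      have := (basisMonomials (Fin n) F).constr_basis F (socleWeight d i₀) a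
      rwa [coe_basisMonomials] at this
    rw [← h1, ← smul_eq_mul, ← map_smul, smul_monomial, smul_eq_mul, mul_one]
  intro hmem
  have key : ∀ q : MvPolynomial (Fin n) F, φ (q * (∏ i, X i) ^ (n - 2)) = 0 := by
    refine Submodule.span_induction (p := fun p _ => ∀ q, φ (q * p) = 0) ?_ ?_ ?_ ?_ hmem
    · rintro _ ⟨j, rfl⟩ q
      induction q using MvPolynomial.induction_on' with
      | monomial m c =>
        simp only [prod_erase_eq_monomial, X_pow_eq_monomial, C_mul_monomial, mul_add,
          monomial_mul, map_add, hφ, socleWeight_rel hn]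
        ring
      | add p q hp hq => rw [add_mul, map_add, hp, hq, add_zero]
    · simp
    · intro x y _ _ hx hy q
      rw [mul_add, map_add, hx, hy, add_zero]
    · intro c x _ hx q
      rw [smul_eq_mul, ← mul_assoc, hx]
  have hP : (∏ i, X i : MvPolynomial (Fin n) F) ^ (n - 2) =
      monomial (Finsupp.equivFunOnFinite.symm fun _ => n - 2) 1 := by
    rw [monomial_eq, Finsupp.prod_fintype _ _ (by simp), ← Finset.prod_pow]
    simp
  have h := key 1
  rw [one_mul, hP, hφ, one_mul, socleWeight, if_pos (by simp)] at h
  exact pow_ne_zero _ hd h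

open MvPolynomial in
lemma prod_X_pow_mem {F : Type*} [Field F] {n : ℕ} (d : F) (hd : d ^ n ≠ 1) :
    (∏ i, X i : MvPolynomial (Fin n) F) ^ (n - 1) ∈
      Ideal.span (Set.range fun j : Fin n =>
        (∏ i ∈ Finset.univ.erase j, X i + C (-d) * X j ^ (n - 1) : MvPolynomial (Fin n) F)) := by
  set J := Ideal.span (Set.range fun j : Fin n =>
        (∏ i ∈ Finset.univ.erase j, X i + C (-d) * X j ^ (n - 1) : MvPolynomial (Fin n) F))
  have hrel : ∀ j : Fin n, Ideal.Quotient.mk J (∏ i ∈ Finset.univ.erase j, X i) =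
      Ideal.Quotient.mk J (C d * X j ^ (n - 1)) := by
    intro j
    rw [Ideal.Quotient.eq]
    have : (∏ i ∈ Finset.univ.erase j, X i + C (-d) * X j ^ (n - 1) :
        MvPolynomial (Fin n) F) ∈ J := Ideal.subset_span ⟨j, rfl⟩
    simpa [sub_eq_add_neg] using this
  have hL : ∏ j : Fin n, ∏ i ∈ Finset.univ.erase j, (X i : MvPolynomial (Fin n) F) =
      (∏ i, X i) ^ (n - 1) := by
    rw [Finset.prod_comm' (t' := Finset.univ) (s' := fun i => Finset.univ.erase i)
      (by intro x y; simp [ne_comm]), ← Finset.prod_pow]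
    simp [Finset.card_erase_of_mem]
  have hR : ∏ j : Fin n, (C d * X j ^ (n - 1) : MvPolynomial (Fin n) F) =
      C (d ^ n) * (∏ i, X i) ^ (n - 1) := by
    rw [Finset.prod_mul_distrib, Finset.prod_pow]
    simp
  have h : Ideal.Quotient.mk J ((∏ i, X i) ^ (n - 1)) =
      Ideal.Quotient.mk J (C (d ^ n) * (∏ i, X i) ^ (n - 1)) := by
    rw [← hL, map_prod, Finset.prod_congr rfl fun j _ => hrel j, ← map_prod, hR, hL]
  rw [Ideal.Quotient.eq] at h
  have h2 := J.mul_mem_left (C (1 - d ^ n)⁻¹) h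
  have h3 : (1 - d ^ n)⁻¹ * (1 - d ^ n) = 1 :=
    inv_mul_cancel₀ (sub_ne_zero.2 (Ne.symm hd))
  have h4 : C (1 - d ^ n)⁻¹ * ((∏ i, X i) ^ (n - 1) - C (d ^ n) * (∏ i, X i) ^ (n - 1)) =
      (∏ i, X i : MvPolynomial (Fin n) F) ^ (n - 1) := by
    calc _ = C ((1 - d ^ n)⁻¹ * (1 - d ^ n)) * (∏ i, X i : MvPolynomial (Fin n) F) ^ (n - 1) := by
          rw [C_mul, C_sub, C_1]; ring
      _ = _ := by rw [h3, C_1, one_mul]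
  rwa [h4] at h2

/-- In `F[x]` an ideal containing `x^{k+1}` but not `x^k` is generated by `x^{k+1}`. -/
lemma ideal_eq_span_X_pow {F : Type*} [Field F] (I : Ideal (Polynomial F)) (k : ℕ)
    (h1 : Polynomial.X ^ (k + 1) ∈ I) (h0 : Polynomial.X ^ k ∉ I) :
    I = Ideal.span {Polynomial.X ^ (k + 1)} := by
  obtain ⟨g, rfl⟩ := (IsPrincipalIdealRing.principal I).principal
  rw [Ideal.submodule_span_eq, Ideal.mem_span_singleton] at h0 h1
  rw [Ideal.submodule_span_eq, Ideal.span_singleton_eq_span_singleton]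
  obtain ⟨i, hi, hg⟩ := (dvd_prime_pow Polynomial.prime_X _).1 h1
  have : i = k + 1 := by
    by_contra hne
    exact h0 (hg.dvd.trans (pow_dvd_pow _ (by omega)))
  rwa [this] at hg

lemma ratFunc_pow_ne_one (n : ℕ) (hn : 2 ≤ n) :
    (-(RatFunc.X * (n : RatFunc ℂ))) ^ n ≠ 1 := by
  intro h
  have h1 : algebraMap (Polynomial ℂ) (RatFunc ℂ) ((-(Polynomial.X * (n : Polynomial ℂ))) ^ n) =
      algebraMap (Polynomial ℂ) (RatFunc ℂ) 1 := by
    simpa using h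
  have h2 := congrArg (Polynomial.eval 0) (RatFunc.algebraMap_injective ℂ h1)
  simp [show n ≠ 0 by omega] at h2

/-- The computation at the heart of Lemma `hhtypea`: over `F = ℂ(r)`, for the mirror
superpotential `w = u₁⋯u_n + r·(u₁^n + ⋯ + u_n^n)`, the kernel of the `F`-algebra map
`F[x] → F[u₁,…,u_n]/J(w)`, `x ↦ [u₁⋯u_n]`, is the principal ideal `(x^{n−1})`; in
particular `(u₁⋯u_n)^{n−1} ∈ J(w)` while `(u₁⋯u_n)^{n−2} ∉ J(w)`. -/
theorem stmt13 (n : ℕ) (hn : 2 ≤ n) :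
    let w : MvPolynomial (Fin n) (RatFunc ℂ) :=
      ∏ i, MvPolynomial.X i +
        MvPolynomial.C RatFunc.X * ∑ i, MvPolynomial.X i ^ n
    let J : Ideal (MvPolynomial (Fin n) (RatFunc ℂ)) :=
      Ideal.span (Set.range fun j => MvPolynomial.pderiv j w)
    RingHom.ker (Polynomial.aeval (Ideal.Quotient.mk J (∏ i, MvPolynomial.X i)) :
        Polynomial (RatFunc ℂ) →ₐ[RatFunc ℂ] MvPolynomial (Fin n) (RatFunc ℂ) ⧸ J) =
      Ideal.span {Polynomial.X ^ (n - 1)} ∧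
    (∏ i, MvPolynomial.X i : MvPolynomial (Fin n) (RatFunc ℂ)) ^ (n - 1) ∈ J ∧
    (∏ i, MvPolynomial.X i : MvPolynomial (Fin n) (RatFunc ℂ)) ^ (n - 2) ∉ J := by

  intro w J
  set d : RatFunc ℂ := -(RatFunc.X * (n : RatFunc ℂ)) with hd
  have hJ : J = Ideal.span (Set.range fun j : Fin n =>
      (∏ i ∈ Finset.univ.erase j, MvPolynomial.X i +
        MvPolynomial.C (-d) * MvPolynomial.X j ^ (n - 1) :
          MvPolynomial (Fin n) (RatFunc ℂ))) := by
    simp only [J, w, pderiv_superpotential, hd, neg_neg]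
  have hd0 : d ≠ 0 := by
    have : (n : RatFunc ℂ) ≠ 0 := Nat.cast_ne_zero.2 (by omega)
    exact neg_ne_zero.2 (mul_ne_zero RatFunc.X_ne_zero this)
  have hmem : (∏ i, MvPolynomial.X i : MvPolynomial (Fin n) (RatFunc ℂ)) ^ (n - 1) ∈ J := by
    rw [hJ]
    exact prod_X_pow_mem d (ratFunc_pow_ne_one n hn)
  have hnot : (∏ i, MvPolynomial.X i : MvPolynomial (Fin n) (RatFunc ℂ)) ^ (n - 2) ∉ J := by
    rw [hJ]
    exact prod_X_pow_notMem hn d hd0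
  refine ⟨?_, hmem, hnot⟩
  have hker : ∀ k : ℕ, Polynomial.X ^ k ∈ RingHom.ker
      (Polynomial.aeval (Ideal.Quotient.mk J (∏ i, MvPolynomial.X i)) :
        Polynomial (RatFunc ℂ) →ₐ[RatFunc ℂ] MvPolynomial (Fin n) (RatFunc ℂ) ⧸ J) ↔
      (∏ i, MvPolynomial.X i : MvPolynomial (Fin n) (RatFunc ℂ)) ^ k ∈ J := by
    intro k
    rw [RingHom.mem_ker, map_pow, Polynomial.aeval_X, ← map_pow, Ideal.Quotient.eq_zero_iff_mem]
  obtain ⟨k, rfl⟩ := Nat.exists_eq_add_of_le' hn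
  exact ideal_eq_span_X_pow _ k ((hker _).2 hmem) (fun h => hnot ((hker _).1 h))
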